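/- For every m ≥ 0 and d ≥ 1, the m-th moment of the rescaled Chebyshev polynomial U_d against the standard semicircle distribution equals the number of m-partite noncrossing pair partitions of {1,...,md}: (1/(2π)) ∫_{−2}^{2} U_d(x)^m √(4 − x²) dx = #{m-partite noncrossing pair partitions of [md]}. -/

import Mathlib

/-- `i` and `j` lie in the same block of the partition `π`. -/
def SameBlock {n : ℕ} (π : Finpartition (Finset.univ : Finset (Fin n))) (i j : Fin n) : Prop :=
  ∃ B ∈ π.parts, i ∈ B ∧ j ∈ B

/-- A partition of `{1, ..., n}` is noncrossing if there are no
`i < i' < j < j'` with `i ~ j`, `i' ~ j'` and `i ≁ i'`. -/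
def IsNoncrossing {n : ℕ} (π : Finpartition (Finset.univ : Finset (Fin n))) : Prop :=
  ∀ i i' j j' : Fin n, i < i' → i' < j → j < j' →
    SameBlock π i j → SameBlock π i' j' → SameBlock π i i'

/-- A pair partition: every block has exactly two elements. -/
def IsPairPartition {n : ℕ} (π : Finpartition (Finset.univ : Finset (Fin n))) : Prop :=
  ∀ B ∈ π.parts, B.card = 2

/-- An `m`-partite partition (with respect to the consecutive intervals of length `d`):
every block contains at most one element from each interval
`{kd+1, ..., (k+1)d}` (0-indexed: the elements `i` with `i / d = k`). -/
def IsMPartite {n : ℕ} (d : ℕ) (π : Finpartition (Finset.univ : Finset (Fin n))) : Prop :=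
  ∀ B ∈ π.parts, ∀ k : ℕ, (B.filter (fun i : Fin n => (i : ℕ) / d = k)).card ≤ 1

/-- The rescaled Chebyshev polynomial of the second kind, characterized by
`U_d(2cos θ) = sin((d+1)θ)/sin θ`, with `U_0 = 1`, `U_1 = X` and
`U_n = X·U_{n−1} − U_{n−2}`. -/
noncomputable def Ucheb : ℕ → Polynomial ℝ
  | 0 => 1
  | 1 => Polynomial.X
  | (n + 2) => Polynomial.X * Ucheb (n + 1) - Ucheb n

/-!
Both sides count the words in up and down steps with `m` intervals of `d` letters that never go
below height `0`, end at height `0` and have the down steps first in each interval.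

For the moment, the Clebsch–Gordan formula `U_h U_d = ∑_{k ≤ min h d} U_{h + d - 2k}` says that
multiplying `U_h` by `U_d` sums over the ways to append `k` down steps and then `d - k` up steps to
a word ending at height `h` without going below `0`. Hence `U_d ^ m` is the sum of `U_h`, with `h`
the final height, over all admissible words, and the semicircle law integrates `U_h` to `0` unless
`h = 0`.

For the partitions, a noncrossing pairing is determined by its set of right endpoints: read as down
steps these give a Dyck word, in which each up step is paired with the down step of the first return
to its starting height. By nesting, no arc has both endpoints in one interval exactly when no left
endpoint precedes a right endpoint in one interval.
-/

open Finset Function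
open Polynomial.Chebyshev (S)

/-! ### Chebyshev polynomials under the semicircle law -/

section Chebyshev

open Polynomial.Chebyshev

theorem Ucheb_eq_S (n : ℕ) : Ucheb n = S ℝ n := by
  induction n using Nat.twoStepInduction with
  | zero => simp [Ucheb]
  | one => simp [Ucheb]
  | more n ih ih' =>
    rw [Ucheb, ih, ih']
    push_cast
    exact (S_add_two ℝ n).symm

theorem S_add_one_mul_S_add_one (R : Type*) [CommRing R] (a : ℤ) (b : ℕ) :
    S R (a + 1) * S R (b + 1) = S R a * S R b + S R (a + b + 2) := by
  induction b using Nat.twoStepInduction with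
  | zero => linear_combination (norm := (simp; ring_nf)) -S_add_two R a
  | one =>
    have h₁ := S_add_two R a
    have h₂ := S_add_two R (a + 1)
    push_cast
    rw [S_two, S_one]
    ring_nf at h₁ h₂ ⊢
    linear_combination -h₂ - Polynomial.X * h₁
  | more b ih ih' =>
    have h₁ := S_add_two R (b + 1)
    have h₂ := S_add_two R b
    have h₃ := S_add_two R (a + b + 2)
    push_cast at ih ih' ⊢
    ring_nf at ih ih' h₁ h₂ h₃ ⊢
    linear_combination S R (1 + a) * h₁ - S R a * h₂ - h₃ + Polynomial.X * ih' - ih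

theorem S_mul_S (R : Type*) [CommRing R] (h d : ℕ) :
    S R h * S R d = ∑ k ∈ range (min d h + 1), S R (h + d - 2 * k) := by
  induction d generalizing h with
  | zero => simp
  | succ d ih =>
    cases h with
    | zero => simp
    | succ h =>
      rw [Nat.succ_min_succ, sum_range_succ']
      push_cast
      rw [S_add_one_mul_S_add_one, ih h]
      congr 1
      · refine sum_congr rfl fun k _ ↦ ?_
        congr 1
        ring
      · congr 1
        ring

theorem integral_mul_sqrt_four_sub_sq {f : ℝ → ℝ} (hf : Continuous f) :
    ∫ x in (-2 : ℝ)..2, f x * √(4 - x ^ 2) =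
      ∫ θ in (0 : ℝ)..Real.pi, f (2 * Real.cos θ) * (2 * Real.sin θ) ^ 2 := by
  have hsubst := intervalIntegral.integral_comp_mul_deriv (a := Real.pi) (b := 0)
    (f := fun θ ↦ 2 * Real.cos θ) (f' := fun θ ↦ 2 * -Real.sin θ)
    (g := fun x ↦ f x * √(4 - x ^ 2))
    (fun θ _ ↦ (Real.hasDerivAt_cos θ).const_mul 2) (by fun_prop) (by fun_prop)
  simp only [Real.cos_pi, Real.cos_zero, mul_neg, mul_one] at hsubst
  rw [← hsubst, intervalIntegral.integral_symm, ← intervalIntegral.integral_neg]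
  refine intervalIntegral.integral_congr fun θ hθ ↦ ?_
  rw [Set.uIcc_of_le Real.pi_pos.le] at hθ
  have hsqrt : √(4 - (2 * Real.cos θ) ^ 2) = 2 * Real.sin θ := by
    rw [show 4 - (2 * Real.cos θ) ^ 2 = (2 * Real.sin θ) ^ 2 by
      linear_combination -4 * Real.sin_sq_add_cos_sq θ]
    exact Real.sqrt_sq (mul_nonneg zero_le_two (Real.sin_nonneg_of_mem_Icc hθ))
  simp only [comp_apply, hsqrt]
  ring

theorem integral_cos_natCast_mul {n : ℕ} (hn : n ≠ 0) :
    ∫ θ in (0 : ℝ)..Real.pi, Real.cos (n * θ) = 0 := by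
  rw [intervalIntegral.integral_comp_mul_left Real.cos (Nat.cast_ne_zero.2 hn)]
  simp [Real.sin_nat_mul_pi]

theorem integral_S_mul_sqrt_four_sub_sq (n : ℕ) :
    ∫ x in (-2 : ℝ)..2, (S ℝ n).eval x * √(4 - x ^ 2) = if n = 0 then 2 * Real.pi else 0 := by
  have hcos (θ : ℝ) : (S ℝ n).eval (2 * Real.cos θ) * (2 * Real.sin θ) ^ 2 =
      2 * Real.cos (n * θ) - 2 * Real.cos ((n + 2 : ℕ) * θ) := by
    have hS := S_two_mul_real_cos θ n
    have hsub : (n : ℝ) * θ = (n + 1) * θ - θ := by ring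
    have hadd : ((n + 2 : ℕ) : ℝ) * θ = (n + 1) * θ + θ := by push_cast; ring
    rw [hsub, hadd, Real.cos_sub, Real.cos_add]
    push_cast at hS
    linear_combination 4 * Real.sin θ * hS
  rw [integral_mul_sqrt_four_sub_sq (S ℝ n).continuous]
  simp_rw [hcos]
  rw [intervalIntegral.integral_sub (Continuous.intervalIntegrable (by fun_prop) _ _)
      (Continuous.intervalIntegrable (by fun_prop) _ _),
    intervalIntegral.integral_const_mul, intervalIntegral.integral_const_mul,
    integral_cos_natCast_mul (by omega : n + 2 ≠ 0)]
  split_ifs with h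
  · simp [h]
  · simp [integral_cos_natCast_mul h]

end Chebyshev

/-! ### Ballot words -/

section Height

/-- The height after `k` letters of the word with down steps at the positions in `C` and up steps
at all others. Words are encoded by their sets of down steps throughout. -/
def height (C : Finset ℕ) (k : ℕ) : ℤ := k - 2 * Nat.count (· ∈ C) k

variable {C C' : Finset ℕ} {N k x : ℕ}

@[simp]
theorem height_zero (C : Finset ℕ) : height C 0 = 0 := by simp [height]

theorem height_succ_of_mem (hx : x ∈ C) : height C (x + 1) = height C x - 1 := by
  simp only [height, Nat.count_succ, if_pos hx]
  push_cast
  ring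

theorem height_succ_of_notMem (hx : x ∉ C) : height C (x + 1) = height C x + 1 := by
  simp only [height, Nat.count_succ, if_neg hx]
  push_cast
  ring

theorem height_congr (h : ∀ y < x, y ∈ C ↔ y ∈ C') : height C x = height C' x := by
  simp only [height, Nat.count_eq_card_filter_range]
  rw [filter_congr fun y hy ↦ h y (mem_range.1 hy)]

/-- The word extending the word `C` of length `N` by `k` down steps, followed only by up steps. -/
def appendDown (C : Finset ℕ) (N k : ℕ) : Finset ℕ := C ∪ Ico N (N + k)

theorem mem_appendDown_of_lt (hx : x < N) : x ∈ appendDown C N k ↔ x ∈ C := by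
  simp [appendDown, hx.not_ge]

theorem mem_appendDown_of_le (hC : C ⊆ range N) (hx : N ≤ x) :
    x ∈ appendDown C N k ↔ x < N + k := by
  have hxC : x ∉ C := fun h ↦ hx.not_gt (mem_range.1 (hC h))
  simp [appendDown, hx, hxC]

theorem height_appendDown_of_le (hx : x ≤ N) : height (appendDown C N k) x = height C x :=
  height_congr fun _ hy ↦ mem_appendDown_of_lt (hy.trans_le hx)

theorem height_appendDown_add (hC : C ⊆ range N) (r : ℕ) :
    height (appendDown C N k) (N + r) = height C N + r - 2 * min r k := by
  induction r with
  | zero => simp [height_appendDown_of_le le_rfl]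
  | succ r ih =>
    have hmem := mem_appendDown_of_le (k := k) hC (Nat.le_add_right N r)
    rw [← add_assoc]
    by_cases hr : r < k
    · rw [height_succ_of_mem (hmem.2 (by omega)), ih]
      omega
    · rw [height_succ_of_notMem (mt hmem.1 (by omega)), ih]
      omega

/-- The words of length `n` that never go below height `0`. -/
def IsBallot (n : ℕ) (C : Finset ℕ) : Prop := C ⊆ range n ∧ ∀ k ≤ n, 0 ≤ height C k

theorem isBallot_appendDown_iff {d : ℕ} (hC : C ⊆ range N) (hk : k ≤ d) :
    IsBallot (N + d) (appendDown C N k) ↔ IsBallot N C ∧ k ≤ height C N := by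
  have hsub : appendDown C N k ⊆ range (N + d) := union_subset
    (hC.trans (range_mono (Nat.le_add_right N d))) fun x hx ↦ by
      rw [mem_Ico] at hx
      exact mem_range.2 (by omega)
  simp only [IsBallot, hsub, hC, true_and]
  constructor
  · intro h
    have hNk := h (N + k) (by omega)
    rw [height_appendDown_add hC] at hNk
    refine ⟨fun x hx ↦ ?_, by omega⟩
    rw [← height_appendDown_of_le hx]
    exact h x (by omega)
  · rintro ⟨h, hle⟩ x hx
    rcases le_total x N with hxN | hxN
    · rw [height_appendDown_of_le hxN]
      exact h x hxN
    · obtain ⟨r, rfl⟩ := Nat.exists_eq_add_of_le hxN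
      rw [height_appendDown_add hC]
      omega

end Height

/-! ### Words whose intervals start with their down steps -/

section BlockBallots

/-- In each of the intervals `{qd, ..., (q+1)d - 1}`, the word `C` has its down steps before its up
steps. -/
def DownFirst (d : ℕ) (C : Finset ℕ) : Prop :=
  ∀ ⦃i j : ℕ⦄, i < j → i / d = j / d → j ∈ C → i ∈ C

variable {d m k : ℕ} {C : Finset ℕ}

theorem mul_le_iff_of_div_eq {i j : ℕ} (h : i / d = j / d) : m * d ≤ i ↔ m * d ≤ j := by
  rcases d.eq_zero_or_pos with rfl | hd
  · simp
  · rw [← Nat.le_div_iff_mul_le hd, h, Nat.le_div_iff_mul_le hd]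

theorem downFirst_appendDown_iff (hC : C ⊆ range (m * d)) :
    DownFirst d (appendDown C (m * d) k) ↔ DownFirst d C := by
  constructor
  · intro h i j hij hdiv hj
    have hjN := mem_range.1 (hC hj)
    rw [← mem_appendDown_of_lt (hij.trans hjN)]
    exact h hij hdiv ((mem_appendDown_of_lt hjN).2 hj)
  · intro h i j hij hdiv hj
    rcases lt_or_ge j (m * d) with hjN | hjN
    · rw [mem_appendDown_of_lt hjN] at hj
      exact (mem_appendDown_of_lt (hij.trans hjN)).2 (h hij hdiv hj)
    · rw [mem_appendDown_of_le hC hjN] at hj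
      exact (mem_appendDown_of_le hC ((mul_le_iff_of_div_eq hdiv).2 hjN)).2 (hij.trans hj)

theorem DownFirst.exists_eq_appendDown (h : DownFirst d C) (hC : C ⊆ range ((m + 1) * d)) :
    ∃ C' ⊆ range (m * d), ∃ k ≤ d, appendDown C' (m * d) k = C := by
  have hd : m * d + d ∉ C := fun hmem ↦ by
    have := mem_range.1 (hC hmem)
    rw [Nat.succ_mul] at this
    omega
  have hex : ∃ k, m * d + k ∉ C := ⟨d, hd⟩
  have hsub : {x ∈ C | x < m * d} ⊆ range (m * d) :=
    fun x hx ↦ mem_range.2 (mem_filter.1 hx).2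
  refine ⟨_, hsub, Nat.find hex, Nat.find_min' hex hd, ?_⟩
  ext x
  rcases lt_or_ge x (m * d) with hx | hx
  · simp [mem_appendDown_of_lt hx, hx]
  · rw [mem_appendDown_of_le hsub hx]
    obtain ⟨r, rfl⟩ := Nat.exists_eq_add_of_le hx
    rw [add_lt_add_iff_left, Nat.lt_find_iff]
    simp only [not_not]
    refine ⟨fun hr ↦ hr r le_rfl, fun hr l hl ↦ ?_⟩
    rcases hl.eq_or_lt with rfl | hlr
    · exact hr
    · have hrd := mem_range.1 (hC hr)
      exact h (by omega) ((Nat.div_eq_of_lt_le (by omega) (by omega)).trans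
        (Nat.div_eq_of_lt_le hx hrd).symm) hr

open Classical in
/-- The ballot words of length `m * d` with the down steps first in each interval of length `d`. -/
noncomputable def blockBallots (d m : ℕ) : Finset (Finset ℕ) :=
  {C ∈ (range (m * d)).powerset | IsBallot (m * d) C ∧ DownFirst d C}

theorem mem_blockBallots : C ∈ blockBallots d m ↔ IsBallot (m * d) C ∧ DownFirst d C := by
  simp only [blockBallots, mem_filter, mem_powerset, and_iff_right_iff_imp]
  exact fun h ↦ h.1.1

theorem height_nonneg_of_mem_blockBallots (hC : C ∈ blockBallots d m) : 0 ≤ height C (m * d) :=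
  (mem_blockBallots.1 hC).1.2 _ le_rfl

theorem appendDown_mem_blockBallots_iff (hC : C ⊆ range (m * d)) (hk : k ≤ d) :
    appendDown C (m * d) k ∈ blockBallots d (m + 1) ↔
      C ∈ blockBallots d m ∧ k ≤ height C (m * d) := by
  rw [mem_blockBallots, mem_blockBallots, downFirst_appendDown_iff hC, Nat.succ_mul,
    isBallot_appendDown_iff hC hk]
  tauto

theorem appendDown_inj {C' : Finset ℕ} {N k' : ℕ} (hC : C ⊆ range N) (hC' : C' ⊆ range N)
    (h : appendDown C N k = appendDown C' N k') : C = C' ∧ k = k' := by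
  have hmem (x : ℕ) : x ∈ appendDown C N k ↔ x ∈ appendDown C' N k' := by rw [h]
  constructor
  · ext x
    by_cases hx : x < N
    · rw [← mem_appendDown_of_lt hx, hmem, mem_appendDown_of_lt hx]
    · exact iff_of_false (fun hxC ↦ hx (mem_range.1 (hC hxC)))
        fun hxC ↦ hx (mem_range.1 (hC' hxC))
  · have hlt (r : ℕ) : r < k ↔ r < k' := by
      have := hmem (N + r)
      rwa [mem_appendDown_of_le hC (Nat.le_add_right N r),
        mem_appendDown_of_le hC' (Nat.le_add_right N r), add_lt_add_iff_left,
        add_lt_add_iff_left] at this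
    exact eq_of_forall_lt_iff hlt

theorem sum_blockBallots_succ {M : Type*} [AddCommMonoid M] (d m : ℕ) (f : Finset ℕ → M) :
    ∑ C ∈ blockBallots d (m + 1), f C = ∑ C ∈ blockBallots d m,
      ∑ k ∈ range (min d (height C (m * d)).toNat + 1), f (appendDown C (m * d) k) := by
  have hsub {C : Finset ℕ} (hC : C ∈ blockBallots d m) : C ⊆ range (m * d) :=
    (mem_blockBallots.1 hC).1.1
  rw [sum_sigma']
  symm
  refine sum_nbij (fun p ↦ appendDown p.1 (m * d) p.2) ?_ ?_ ?_ fun _ _ ↦ rfl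
  · rintro ⟨C, k⟩ hp
    obtain ⟨hC, hk⟩ : C ∈ blockBallots d m ∧ k < min d (height C (m * d)).toNat + 1 := by
      simpa using hp
    have hnonneg := height_nonneg_of_mem_blockBallots hC
    have hkd : k ≤ d := by omega
    exact (appendDown_mem_blockBallots_iff (hsub hC) hkd).2 ⟨hC, by omega⟩
  · rintro ⟨C, k⟩ hp ⟨C', k'⟩ hp' heq
    simp only [coe_sigma, Set.mem_sigma_iff, mem_coe] at hp hp'
    obtain ⟨rfl, rfl⟩ := appendDown_inj (hsub hp.1) (hsub hp'.1) heq
    rfl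
  · intro C hC
    obtain ⟨hballot, hdown⟩ := mem_blockBallots.1 hC
    obtain ⟨C, hCN, k, hk, rfl⟩ := hdown.exists_eq_appendDown hballot.1
    obtain ⟨hC, hle⟩ := (appendDown_mem_blockBallots_iff hCN hk).1 hC
    refine ⟨⟨C, k⟩, ?_, rfl⟩
    simp only [coe_sigma, Set.mem_sigma_iff, mem_coe, mem_range]
    exact ⟨hC, by omega⟩

theorem S_pow (R : Type*) [CommRing R] (d m : ℕ) :
    S R d ^ m = ∑ C ∈ blockBallots d m, S R (height C (m * d)) := by
  induction m with
  | zero =>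
    have h : blockBallots d 0 = {∅} := by
      ext C
      simp +contextual [mem_blockBallots, IsBallot, DownFirst]
    simp [h]
  | succ m ih =>
    rw [pow_succ, ih, sum_mul, sum_blockBallots_succ]
    refine sum_congr rfl fun C hC ↦ ?_
    have hh := Int.toNat_of_nonneg (height_nonneg_of_mem_blockBallots hC)
    rw [← hh, S_mul_S]
    refine sum_congr rfl fun k hk ↦ ?_
    rw [Int.toNat_natCast, mem_range] at hk
    rw [Nat.succ_mul, height_appendDown_add (mem_blockBallots.1 hC).1.1, ← hh]
    congr 1
    omega

open Classical in
theorem semicircle_moment_S (d m : ℕ) :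
    1 / (2 * Real.pi) * ∫ x in (-2 : ℝ)..2, (S ℝ d).eval x ^ m * √(4 - x ^ 2) =
      #{C ∈ blockBallots d m | height C (m * d) = 0} := by
  simp_rw [← Polynomial.eval_pow, S_pow, Polynomial.eval_finsetSum, sum_mul]
  rw [intervalIntegral.integral_finsetSum
    fun _ _ ↦ Continuous.intervalIntegrable (by fun_prop) _ _, mul_sum, card_filter, Nat.cast_sum]
  refine sum_congr rfl fun C hC ↦ ?_
  lift height C (m * d) to ℕ using height_nonneg_of_mem_blockBallots hC with h
  rw [integral_S_mul_sqrt_four_sub_sq]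
  split_ifs with h0 h0' h0'
  · rw [Nat.cast_one, one_div_mul_cancel Real.two_pi_pos.ne']
  · omega
  · omega
  · simp

end BlockBallots

/-! ### Noncrossing pairings and Dyck words -/

/-- A noncrossing perfect matching of a linear order, given as the fixed-point-free involution that
sends each element to its partner. -/
structure IsNoncrossingPairing {α : Type*} [LinearOrder α] (p : α → α) : Prop where
  involutive : Involutive p
  apply_ne (i : α) : p i ≠ i
  apply_le_of_lt {i j : α} : i < j → j < p i → p j ≤ p i

namespace IsNoncrossingPairing

variable {α : Type*} [LinearOrder α] {p : α → α} {i j : α}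

theorem apply_lt_of_lt (hp : IsNoncrossingPairing p) (hij : i < j) (hji : j < p i) :
    p j < p i :=
  (hp.apply_le_of_lt hij hji).lt_of_ne fun h ↦ hij.ne' (hp.involutive.injective h)

theorem apply_lt_apply (hp : IsNoncrossingPairing p) (hij : i < j) (hi : j ≤ p i) (hj : j < p j) :
    p j < p i := by
  refine hp.apply_lt_of_lt hij (hi.lt_of_ne ?_)
  rintro rfl
  rw [hp.involutive] at hj
  exact (hij.trans hj).false

end IsNoncrossingPairing

section OpenArcs

variable {n : ℕ} {p : Fin n → Fin n}

/-- The right endpoints of the arcs of a pairing. -/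
def closers (p : Fin n → Fin n) : Finset ℕ :=
  ({x | p x < x} : Finset (Fin n)).map Fin.valEmbedding

theorem val_mem_closers {x : Fin n} : (x : ℕ) ∈ closers p ↔ p x < x := by
  simp [closers, Fin.val_inj]

theorem closers_subset (p : Fin n → Fin n) : closers p ⊆ range n := by
  intro x hx
  obtain ⟨y, -, rfl⟩ := mem_map.1 hx
  exact mem_range.2 y.isLt

/-- The left endpoints of the arcs passing over the cut between positions `k - 1` and `k`. -/
def openArcs (p : Fin n → Fin n) (k : ℕ) : Finset (Fin n) := {x | x < k ∧ k ≤ p x}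

theorem mem_openArcs {k : ℕ} {x : Fin n} : x ∈ openArcs p k ↔ x < k ∧ k ≤ p x := by
  simp [openArcs]

theorem count_mem_closers (p : Fin n → Fin n) (k : ℕ) :
    Nat.count (· ∈ closers p) k = #{x : Fin n | x < k ∧ p x < x} := by
  rw [Nat.count_eq_card_filter_range, ← card_map Fin.valEmbedding]
  congr 1
  ext x
  simp only [closers, mem_filter, mem_range, mem_map, mem_univ, true_and, Fin.valEmbedding_apply]
  grind

/-- The elements below `k` are the left endpoints of open arcs and the two endpoints of each arc
that has been closed. -/
theorem card_openArcs (hp : IsNoncrossingPairing p) {k : ℕ} (hk : k ≤ n) :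
    #(openArcs p k) = height (closers p) k := by
  have hclosed : #{x : Fin n | x < p x ∧ p x < k} = #{x : Fin n | x < k ∧ p x < x} :=
    card_nbij' p p (by intro x; simp [hp.involutive x, and_comm])
      (by intro x; simp [hp.involutive x, and_comm])
      (fun x _ ↦ hp.involutive x) fun x _ ↦ hp.involutive x
  have hbelow : #{x : Fin n | x < k} = k := by
    rw [Fin.card_filter_val_lt, min_eq_right hk]
  have hopener : #{x : Fin n | x < k ∧ x < p x} =
      #(openArcs p k) + #{x : Fin n | x < p x ∧ p x < k} := by
    rw [openArcs, ← card_union_of_disjoint (disjoint_filter.2 fun x _ ↦ by omega), ← filter_or]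
    congr 1
    ext x
    simp only [mem_filter, mem_univ, true_and]
    omega
  have hsplit : #{x : Fin n | x < k} =
      #{x : Fin n | x < k ∧ p x < x} + #{x : Fin n | x < k ∧ x < p x} := by
    rw [← card_union_of_disjoint (disjoint_filter.2 fun x _ ↦ by omega), ← filter_or]
    congr 1
    ext x
    have hne := hp.apply_ne x
    simp only [mem_filter, mem_univ, true_and]
    omega
  rw [height, count_mem_closers]
  omega

/-- The Dyck words of length `n`. -/
def IsDyck (n : ℕ) (C : Finset ℕ) : Prop := IsBallot n C ∧ height C n = 0

theorem isDyck_closers (hp : IsNoncrossingPairing p) : IsDyck n (closers p) := by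
  refine ⟨⟨closers_subset p, fun k hk ↦ ?_⟩, ?_⟩
  · rw [← card_openArcs hp hk]
    exact Nat.cast_nonneg _
  · rw [← card_openArcs hp le_rfl, Nat.cast_eq_zero, card_eq_zero]
    ext x
    simp [mem_openArcs]

theorem openArcs_ssubset (hp : IsNoncrossingPairing p) {i : Fin n} {k : ℕ} (hik : i < k)
    (hki : k ≤ p i) : openArcs p i ⊂ openArcs p k := by
  rw [ssubset_iff_of_subset]
  · exact ⟨i, mem_openArcs.2 ⟨hik, hki⟩, by simp [mem_openArcs]⟩
  · intro a ha
    obtain ⟨hai, hia⟩ := mem_openArcs.1 ha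
    have hlt := hp.apply_lt_apply hai hia (by omega)
    exact mem_openArcs.2 ⟨by omega, by omega⟩

theorem openArcs_apply_add_one (hp : IsNoncrossingPairing p) {i : Fin n} (hi : i < p i) :
    openArcs p (p i + 1) = openArcs p i := by
  ext a
  rw [mem_openArcs, mem_openArcs]
  constructor
  · rintro ⟨hai, hia⟩
    have hne : a ≠ p i := by
      rintro rfl
      rw [hp.involutive] at hia
      omega
    have hle : ¬ i < a := fun h ↦ by
      have := hp.apply_lt_of_lt h (by omega)
      omega
    have hne' : a ≠ i := by
      rintro rfl
      omega
    omega
  · rintro ⟨hai, hia⟩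
    have hlt := hp.apply_lt_apply hai hia hi
    omega

end OpenArcs

section Matched

variable {n : ℕ} {C : Finset ℕ} {i i' j j' x y y' : ℕ}

/-- The down step at `j` brings the word `C` back, for the first time, to its height before the up
step at `i`. -/
def Matched (C : Finset ℕ) (i j : ℕ) : Prop :=
  i < j ∧ height C (j + 1) = height C i ∧ ∀ k, i < k → k ≤ j → height C i < height C k

namespace Matched

theorem left_notMem (h : Matched C i j) : i ∉ C := fun hi ↦ by
  have hlt := h.2.2 (i + 1) i.lt_succ_self h.1
  rw [height_succ_of_mem hi] at hlt
  omega

theorem right_mem (h : Matched C i j) : j ∈ C := by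
  by_contra hj
  have heq := h.2.1
  have hlt := h.2.2 j h.1 le_rfl
  rw [height_succ_of_notMem hj] at heq
  omega

theorem left_le_left (h : Matched C i j) (h' : Matched C i' j) : i' ≤ i := by
  by_contra! hlt
  have := h.2.2 i' hlt h'.1.le
  have := h.2.1
  have := h'.2.1
  omega

theorem right_le_right (h : Matched C i j) (h' : Matched C i j') : j' ≤ j := by
  by_contra! hlt
  have := h'.2.2 (j + 1) (h.1.trans j.lt_succ_self) hlt
  have := h.2.1
  omega

theorem right_le_of_lt (h : Matched C i j) (h' : Matched C i' j') (hi : i < i') (hj : i' ≤ j) :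
    j' ≤ j := by
  by_contra! hlt
  have := h.2.2 i' hi hj
  have := h'.2.2 (j + 1) (by omega) hlt
  have := h.2.1
  omega

end Matched

theorem matched_unique (h : Matched C x y ∨ Matched C y x)
    (h' : Matched C x y' ∨ Matched C y' x) : y = y' := by
  rcases h with h | h <;> rcases h' with h' | h'
  · exact (h'.right_le_right h).antisymm (h.right_le_right h')
  · exact absurd h'.right_mem h.left_notMem
  · exact absurd h.right_mem h'.left_notMem
  · exact (h'.left_le_left h).antisymm (h.left_le_left h')

theorem IsDyck.exists_matched_right (hC : IsDyck n C) (hin : i < n) (hi : i ∉ C) :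
    ∃ j < n, Matched C i j := by
  have hn : height C n ≤ height C i := hC.2.trans_le (hC.1.2 i hin.le)
  obtain ⟨l, hl, hmin⟩ := exists_min_image {k ∈ Ioc i n | height C k ≤ height C i} id
    ⟨n, mem_filter.2 ⟨mem_Ioc.2 ⟨hin, le_rfl⟩, hn⟩⟩
  obtain ⟨⟨hil, hln⟩, hle⟩ : (i < l ∧ l ≤ n) ∧ height C l ≤ height C i := by simpa using hl
  have hfirst {k : ℕ} (hik : i < k) (hkl : k < l) : height C i < height C k :=
    lt_of_not_ge fun h ↦
      (hmin k (mem_filter.2 ⟨mem_Ioc.2 ⟨hik, hkl.le.trans hln⟩, h⟩)).not_gt hkl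
  obtain ⟨j, rfl⟩ := Nat.exists_eq_add_one_of_ne_zero (Nat.ne_zero_of_lt hil)
  have hij : i < j := (Nat.le_of_lt_succ hil).lt_of_ne <| by
    rintro rfl
    rw [height_succ_of_notMem hi] at hle
    omega
  refine ⟨j, hln, hij, hle.antisymm ?_, fun k hik hkj ↦ hfirst hik (Nat.lt_succ_of_le hkj)⟩
  have hj := hfirst hij j.lt_succ_self
  by_cases hjC : j ∈ C
  · rw [height_succ_of_mem hjC]
    omega
  · rw [height_succ_of_notMem hjC]
    omega

theorem IsBallot.exists_matched_left (hC : IsBallot n C) (hj : j ∈ C) : ∃ i, Matched C i j := by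
  have hnonneg := hC.2 (j + 1) (mem_range.1 (hC.1 hj))
  have hstep := height_succ_of_mem hj
  have hj0 : 0 < j := Nat.pos_of_ne_zero <| by
    rintro rfl
    rw [height_zero] at hstep
    omega
  obtain ⟨i, hi, hmax⟩ := exists_max_image {k ∈ range j | height C k ≤ height C (j + 1)} id
    ⟨0, mem_filter.2 ⟨mem_range.2 hj0, by rwa [height_zero]⟩⟩
  obtain ⟨hij, hle⟩ : i < j ∧ height C i ≤ height C (j + 1) := by simpa using hi
  have hlast {k : ℕ} (hik : i < k) (hkj : k ≤ j) : height C (j + 1) < height C k := by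
    rcases hkj.eq_or_lt with rfl | hkj
    · omega
    · exact lt_of_not_ge fun h ↦
        (hmax k (mem_filter.2 ⟨mem_range.2 hkj, h⟩)).not_gt hik
  have hreturn : height C (j + 1) = height C i := by
    have hsucc := hlast i.lt_succ_self hij
    by_cases hiC : i ∈ C
    · rw [height_succ_of_mem hiC] at hsucc
      omega
    · rw [height_succ_of_notMem hiC] at hsucc
      omega
  exact ⟨i, hij, hreturn, fun k hik hkj ↦ hreturn ▸ hlast hik hkj⟩

theorem IsDyck.exists_matched (hC : IsDyck n C) (x : Fin n) :
    ∃ y : Fin n, Matched C x y ∨ Matched C y x := by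
  by_cases hx : (x : ℕ) ∈ C
  · obtain ⟨y, hy⟩ := hC.1.exists_matched_left hx
    exact ⟨⟨y, hy.1.trans x.isLt⟩, .inr hy⟩
  · obtain ⟨y, hyn, hy⟩ := hC.exists_matched_right x.isLt hx
    exact ⟨⟨y, hyn⟩, .inl hy⟩

variable {p : Fin n → Fin n}

theorem isNoncrossingPairing_of_matched
    (h : ∀ x : Fin n, Matched C x (p x) ∨ Matched C (p x) x) : IsNoncrossingPairing p where
  involutive x := Fin.val_injective (matched_unique (h (p x)) (h x).symm)
  apply_ne x hx := by
    rcases h x with hm | hm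
    · exact hm.1.ne (by rw [hx])
    · exact hm.1.ne (by rw [hx])
  apply_le_of_lt {i j} hij hji := by
    by_contra! hlt
    have hi := (h i).resolve_right fun hm ↦ hm.1.not_gt (hij.trans hji)
    have hj := (h j).resolve_right fun hm ↦ hm.1.not_gt (hji.trans hlt)
    exact (hi.right_le_of_lt hj hij hji.le).not_gt hlt

theorem closers_eq_of_matched (hC : C ⊆ range n)
    (h : ∀ x : Fin n, Matched C x (p x) ∨ Matched C (p x) x) : closers p = C := by
  ext x
  by_cases hx : x < n
  · lift x to Fin n using hx
    rw [val_mem_closers]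
    rcases h x with hm | hm
    · exact iff_of_false (Fin.lt_def.2 hm.1).not_gt hm.left_notMem
    · exact iff_of_true (Fin.lt_def.2 hm.1) hm.right_mem
  · exact iff_of_false (fun h ↦ hx (mem_range.1 (closers_subset p h)))
      fun h ↦ hx (mem_range.1 (hC h))

theorem matched_of_lt_apply (hp : IsNoncrossingPairing p) {i : Fin n} (hi : i < p i) :
    Matched (closers p) i (p i) := by
  refine ⟨hi, ?_, fun k hik hki ↦ ?_⟩
  · rw [← card_openArcs hp (p i).isLt, openArcs_apply_add_one hp hi, card_openArcs hp i.isLt.le]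
  · rw [← card_openArcs hp i.isLt.le, ← card_openArcs hp (hki.trans (p i).isLt.le), Nat.cast_lt]
    exact card_lt_card (openArcs_ssubset hp hik hki)

theorem matched_closers (hp : IsNoncrossingPairing p) (x : Fin n) :
    Matched (closers p) x (p x) ∨ Matched (closers p) (p x) x := by
  rcases (hp.apply_ne x).lt_or_gt with hx | hx
  · have := matched_of_lt_apply hp (i := p x) (by rwa [hp.involutive])
    rw [hp.involutive] at this
    exact .inr this
  · exact .inl (matched_of_lt_apply hp hx)

theorem bijOn_closers (n : ℕ) :
    Set.BijOn closers {p : Fin n → Fin n | IsNoncrossingPairing p} {C | IsDyck n C} := by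
  refine ⟨fun p hp ↦ isDyck_closers hp, fun p hp q hq heq ↦ funext fun x ↦ ?_, fun C hC ↦ ?_⟩
  · have hqx := matched_closers hq x
    rw [← heq] at hqx
    exact Fin.val_injective (matched_unique (matched_closers hp x) hqx)
  · choose p hp using hC.exists_matched
    exact ⟨p, isNoncrossingPairing_of_matched hp, closers_eq_of_matched hC.1.1 hp⟩

end Matched

/-! ### Pair partitions as pairings -/

section Partner

theorem finpartition_ext_of_part {α : Type*} [DecidableEq α] {s : Finset α} {π π' : Finpartition s}
    (h : ∀ x, π.part x = π'.part x) : π = π' := by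
  have himage (P : Finpartition s) : (P.parts : Set (Finset α)) = P.part '' s :=
    (P.part_surjOn.image_eq_of_mapsTo fun _ hx ↦ P.part_mem.2 hx).symm
  exact Finpartition.ext (coe_injective (by rw [himage, himage, funext h]))

variable {n d : ℕ} {π : Finpartition (univ : Finset (Fin n))} {p : Fin n → Fin n} {x y : Fin n}

theorem sameBlock_iff_mem_part : SameBlock π x y ↔ y ∈ π.part x := by
  simp only [SameBlock, π.mem_part_iff_exists, and_comm]

/-- The other element of the block of `x` in a pair partition, and junk for other partitions. -/
noncomputable def partner (π : Finpartition (univ : Finset (Fin n))) (x : Fin n) : Fin n :=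
  if h : ((π.part x).erase x).Nonempty then h.choose else x

namespace IsPairPartition

theorem card_part (hπ : IsPairPartition π) (x : Fin n) : #(π.part x) = 2 :=
  hπ _ (π.part_mem.2 (mem_univ x))

theorem partner_mem_erase (hπ : IsPairPartition π) (x : Fin n) :
    partner π x ∈ (π.part x).erase x := by
  have h : ((π.part x).erase x).Nonempty := by
    rw [← card_pos, card_erase_of_mem (π.mem_part (mem_univ x)), hπ.card_part]
    norm_num
  rw [partner, dif_pos h]
  exact h.choose_spec

theorem partner_ne (hπ : IsPairPartition π) (x : Fin n) : partner π x ≠ x :=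
  ne_of_mem_erase (hπ.partner_mem_erase x)

theorem part_eq (hπ : IsPairPartition π) (x : Fin n) : π.part x = {x, partner π x} := by
  refine (eq_of_subset_of_card_le ?_ ?_).symm
  · rw [insert_subset_iff, singleton_subset_iff]
    exact ⟨π.mem_part (mem_univ x), mem_of_mem_erase (hπ.partner_mem_erase x)⟩
  · rw [hπ.card_part, card_pair (hπ.partner_ne x).symm]

theorem sameBlock_iff (hπ : IsPairPartition π) : SameBlock π x y ↔ y = x ∨ y = partner π x := by
  rw [sameBlock_iff_mem_part, hπ.part_eq, mem_insert, mem_singleton]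

theorem partner_partner (hπ : IsPairPartition π) (x : Fin n) : partner π (partner π x) = x := by
  obtain ⟨B, hB, hx, hpx⟩ := hπ.sameBlock_iff.2 (.inr (rfl : partner π x = _))
  exact ((hπ.sameBlock_iff.1 ⟨B, hB, hpx, hx⟩).resolve_left (hπ.partner_ne x).symm).symm

theorem isNoncrossingPairing_partner (hπ : IsPairPartition π) (hnc : IsNoncrossing π) :
    IsNoncrossingPairing (partner π) where
  involutive := hπ.partner_partner
  apply_ne := hπ.partner_ne
  apply_le_of_lt {i j} hij hji := by
    by_contra! hlt
    rcases hπ.sameBlock_iff.1 (hnc i j _ _ hij hji hlt (hπ.sameBlock_iff.2 (.inr rfl))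
      (hπ.sameBlock_iff.2 (.inr rfl))) with h | h
    · exact hij.ne' h
    · exact hji.ne h

end IsPairPartition

/-- The partition into the orbits of an involution. -/
noncomputable def orbitPartition (p : Fin n → Fin n) : Finpartition (univ : Finset (Fin n)) :=
  open Classical in Finpartition.ofSetoid (Setoid.ker fun x ↦ s(x, p x))

theorem IsNoncrossingPairing.part_orbitPartition (hp : IsNoncrossingPairing p) (x : Fin n) :
    (orbitPartition p).part x = {x, p x} := by
  classical
  ext y
  rw [orbitPartition, Finpartition.mem_part_ofSetoid_iff_rel]
  simp only [Setoid.ker_def, mem_insert, mem_singleton, Sym2.eq_iff]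
  have := hp.involutive x
  have := hp.involutive y
  grind

theorem bijOn_partner (n : ℕ) :
    Set.BijOn partner {π : Finpartition (univ : Finset (Fin n)) |
      IsNoncrossing π ∧ IsPairPartition π} {p | IsNoncrossingPairing p} := by
  refine ⟨fun π hπ ↦ hπ.2.isNoncrossingPairing_partner hπ.1, fun π hπ π' hπ' heq ↦
    finpartition_ext_of_part fun x ↦ ?_, fun p hp ↦ ?_⟩
  · rw [hπ.2.part_eq, hπ'.2.part_eq, heq]
  · have hpair : IsPairPartition (orbitPartition p) := fun B hB ↦ by
      obtain ⟨x, hx⟩ := (orbitPartition p).nonempty_of_mem_parts hB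
      rw [← (orbitPartition p).part_eq_of_mem hB hx, hp.part_orbitPartition,
        card_pair (hp.apply_ne x).symm]
    have hpartner : partner (orbitPartition p) = p := funext fun x ↦ by
      have hmem := hpair.partner_mem_erase x
      rw [hp.part_orbitPartition] at hmem
      simpa [hpair.partner_ne x] using hmem
    refine ⟨_, ⟨fun i i' j j' hi hj hj' hij hij' ↦ ?_, hpair⟩, hpartner⟩
    rw [hpair.sameBlock_iff, hpartner] at hij hij'
    obtain rfl := hij.resolve_left (hi.trans hj).ne'
    obtain rfl := hij'.resolve_left (hj.trans hj').ne'
    exact absurd hj' (hp.apply_le_of_lt hi hj).not_gt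

theorem IsPairPartition.isMPartite_iff (hπ : IsPairPartition π) :
    IsMPartite d π ↔ ∀ x : Fin n, (x / d : ℕ) ≠ partner π x / d := by
  constructor
  · intro h x hdiv
    have hcard := h _ (π.part_mem.2 (mem_univ x)) (x / d : ℕ)
    rw [hπ.part_eq, filter_true_of_mem (by simp [hdiv]), card_pair (hπ.partner_ne x).symm] at hcard
    omega
  · intro h B hB k
    rw [card_le_one]
    intro x hx y hy
    rw [mem_filter] at hx hy
    by_contra hne
    obtain rfl := (hπ.sameBlock_iff.1 ⟨B, hB, hx.1, hy.1⟩).resolve_left (Ne.symm hne)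
    exact h x (hx.2.trans hy.2.symm)

theorem IsNoncrossingPairing.downFirst_closers_iff (hp : IsNoncrossingPairing p) :
    DownFirst d (closers p) ↔ ∀ x : Fin n, (x / d : ℕ) ≠ p x / d := by
  constructor
  · intro h x hdiv
    rcases (hp.apply_ne x).lt_or_gt with hx | hx
    · have := val_mem_closers.1 (h hx hdiv.symm (val_mem_closers.2 hx))
      rw [hp.involutive] at this
      exact this.not_gt hx
    · have hpx : p (p x) < p x := by rwa [hp.involutive]
      exact (val_mem_closers.1 (h hx hdiv (val_mem_closers.2 hpx))).not_gt hx
  · intro h i j hij hdiv hj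
    have hjn := mem_range.1 (closers_subset p hj)
    lift j to Fin n using hjn
    lift i to Fin n using hij.trans j.isLt
    rw [val_mem_closers] at hj ⊢
    have hconst {k : ℕ} (hik : i ≤ k) (hkj : k ≤ j) : k / d = j / d :=
      (Nat.div_le_div_right hkj).antisymm (hdiv ▸ Nat.div_le_div_right hik)
    have hji : p j < i := by
      by_contra! hle
      exact h j (hconst hle hj.le).symm
    by_contra! hle
    have hi : i < p i := hle.lt_of_ne (hp.apply_ne i).symm
    have hij' : p i ≤ j := by
      have := hp.apply_le_of_lt hji (by rwa [hp.involutive])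
      rwa [hp.involutive] at this
    exact h i (hdiv.trans (hconst hi.le hij').symm)

open Classical in
theorem card_noncrossing_eq_card_blockBallots (d m : ℕ) :
    Nat.card {π : Finpartition (univ : Finset (Fin (m * d))) //
        IsNoncrossing π ∧ IsPairPartition π ∧ IsMPartite d π} =
      #{C ∈ blockBallots d m | height C (m * d) = 0} := by
  have hcard := (((bijOn_closers (m * d)).comp (bijOn_partner (m * d))).inter_mapsTo
    (Set.mapsTo_preimage _ {C | DownFirst d C}) Set.inter_subset_right).ncard_eq
  have hpart : {π : Finpartition (univ : Finset (Fin (m * d))) |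
      IsNoncrossing π ∧ IsPairPartition π ∧ IsMPartite d π} =
      {π | IsNoncrossing π ∧ IsPairPartition π} ∩
        closers ∘ partner ⁻¹' {C | DownFirst d C} := by
    ext π
    simp only [Set.mem_ofPred_eq, Set.mem_inter_iff, Set.mem_preimage, comp_apply, ← and_assoc]
    refine and_congr_right fun ⟨hnc, hpair⟩ ↦ ?_
    exact hpair.isMPartite_iff.trans
      (hpair.isNoncrossingPairing_partner hnc).downFirst_closers_iff.symm
  have hword : (({C ∈ blockBallots d m | height C (m * d) = 0} : Finset (Finset ℕ)) :
      Set (Finset ℕ)) = {C | IsDyck (m * d) C} ∩ {C | DownFirst d C} := by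
    ext C
    simp only [coe_filter, mem_blockBallots, IsDyck, Set.mem_ofPred_eq, Set.mem_inter_iff]
    tauto
  rw [← Set.ncard_coe_finset, hword, ← hcard, ← hpart]
  exact Nat.card_coe_set_eq _

end Partner

/-- The `m`-th moment of the rescaled Chebyshev polynomial `U_d` against the standard
semicircle distribution equals the number of `m`-partite noncrossing pair partitions
of `{1, ..., md}`. -/
theorem chebyshev_moment_eq_card_noncrossing (m d : ℕ) (hd : 1 ≤ d) :
    (1 / (2 * Real.pi)) *
        ∫ x in (-2:ℝ)..2, (Ucheb d).eval x ^ m * Real.sqrt (4 - x ^ 2) =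
      (Nat.card {π : Finpartition (Finset.univ : Finset (Fin (m * d))) //
        IsNoncrossing π ∧ IsPairPartition π ∧ IsMPartite d π} : ℝ) := by
  rw [card_noncrossing_eq_card_blockBallots, ← semicircle_moment_S, Ucheb_eq_S]
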